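/- arXiv:1210.4781 — 3 statements merged into one kernel-verified Lean document; each statement's English description precedes it below -/
import Mathlib

section
/- Let k be an algebraically closed field and let U and U' be integral separated k-schemes of finite type (integral k-varieties), and let φ : U' → U be a finite surjective morphism. Then there exist a nonempty affine open subscheme W of U, a nonempty affine open subscheme W' of U' whose image under φ is contained in W, an integral affine k-variety W'', and k-morphisms φ₁ : W' → W'' and φ₂ : W'' → W such that: (1) the restriction of φ to W' equals φ₂ ∘ φ₁; (2) the extension of function fields k(W'') ↪ k(W') induced by φ₁ is purely inseparable; (3) the extension of function fields k(W) ↪ k(W'') induced by φ₂ is separable. -/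
open AlgebraicGeometry CategoryTheory

universe u

/-!
Shrink `U` to an affine open `W` with coordinate ring `A`; its preimage `W'` is affine with
coordinate ring `B` finite over `A`. Every finite extension splits at its relative separable
closure into a separable extension followed by a purely inseparable one, so it is enough to realise
an arbitrary intermediate field `E` of `Frac B / Frac A` as the function field of a scheme between
`W'` and `W`. Every element of `Frac B` is a fraction with numerator in `B` and denominator in `A`,
hence `E` is generated over `Frac A` by finitely many elements of `B`. These are integral over `A`,
so the `A`-subalgebra `C` of `B` they generate is finite over `A`, and `W'' = Spec C` does the job.
-/

section Fields

variable {K F L : Type*} [Field K] [Field F] [Field L] [Algebra K F] [Algebra F L] [Algebra K L]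
  [IsScalarTower K F L]

lemma isSeparable_of_fieldRange_le_separableClosure
    (h : (IsScalarTower.toAlgHom K F L).fieldRange ≤ separableClosure K L) :
    Algebra.IsSeparable K F := by
  have : Algebra.IsSeparable K (IsScalarTower.toAlgHom K F L).fieldRange :=
    (le_separableClosure_iff K L _).1 h
  exact .of_algHom K (IsScalarTower.toAlgHom K F L).fieldRange
    (IsScalarTower.toAlgHom K F L).rangeRestrict

lemma isPurelyInseparable_of_separableClosure_le_fieldRange [Algebra.IsAlgebraic K L]
    (h : separableClosure K L ≤ (IsScalarTower.toAlgHom K F L).fieldRange) :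
    IsPurelyInseparable F L := by
  let e := AlgEquiv.ofInjectiveField (IsScalarTower.toAlgHom K F L)
  have : IsPurelyInseparable (IsScalarTower.toAlgHom K F L).fieldRange L :=
    (separableClosure_le_iff K L _).1 h
  let : Algebra (IsScalarTower.toAlgHom K F L).fieldRange F := e.symm.toRingHom.toAlgebra
  have : IsScalarTower (IsScalarTower.toAlgHom K F L).fieldRange F L :=
    .of_algebraMap_eq fun x ↦ (congrArg Subtype.val (e.apply_symm_apply x)).symm
  exact IsPurelyInseparable.tower_top (IsScalarTower.toAlgHom K F L).fieldRange F L

end Fields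

section FractionRing

variable {A B K L : Type*} [CommRing A] [CommRing B] [Field K] [Field L] [Algebra A B]
  [Algebra A K] [Algebra B L] [Algebra A L] [Algebra K L] [IsScalarTower A B L]
  [IsScalarTower A K L] [IsFractionRing B L]

lemma exists_eq_div_of_isAlgebraic [FaithfulSMul A B] [Algebra.IsAlgebraic A B] (x : L) :
    ∃ (b : B) (a : A), algebraMap A L a ≠ 0 ∧ x = algebraMap B L b / algebraMap A L a := by
  have : Nontrivial A := (algebraMap A L).domain_nontrivial
  have : IsDomain B := (IsFractionRing.injective B L).isDomain (algebraMap B L)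
  obtain ⟨⟨b, _, a, ha, rfl⟩, hx⟩ :=
    IsLocalization.surj (Algebra.algebraMapSubmonoid B (nonZeroDivisors A)) x
  have ha' : algebraMap A L a ≠ 0 := by
    rw [IsScalarTower.algebraMap_apply A B L]
    exact IsFractionRing.to_map_ne_zero_of_mem_nonZeroDivisors
      (map_mem_nonZeroDivisors _ (FaithfulSMul.algebraMap_injective A B) ha)
  refine ⟨b, a, ha', ?_⟩
  rw [eq_div_iff ha', IsScalarTower.algebraMap_apply A B L, hx]

lemma exists_subalgebra_finite_closure_image_eq [IsFractionRing A K] [Algebra.IsIntegral A B]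
    {E : IntermediateField K L} (hE : E.FG) :
    ∃ C : Subalgebra A B, Module.Finite A C ∧
      Subfield.closure (algebraMap B L '' C) = E.toSubfield := by
  have : FaithfulSMul A L := .trans A K L
  have : FaithfulSMul A B := .tower_bot A B L
  have : Nontrivial A := (algebraMap A L).domain_nontrivial
  obtain ⟨t, rfl⟩ := hE
  choose num den hden hdiv using exists_eq_div_of_isAlgebraic (A := A) (B := B) (L := L)
  have num_mem (x) (hx : x ∈ IntermediateField.adjoin K (t : Set L)) :
      algebraMap B L (num x) ∈ IntermediateField.adjoin K (t : Set L) := by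
    rw [← (eq_div_iff (hden x)).1 (hdiv x), IsScalarTower.algebraMap_apply A K L]
    exact mul_mem hx (algebraMap_mem _ _)
  let C := Algebra.adjoin A (num '' t)
  have mem_closure (c) (hc : c ∈ C) :
      algebraMap B L c ∈ Subfield.closure (algebraMap B L '' C) :=
    Subfield.subset_closure ⟨c, hc, rfl⟩
  have algebraMap_mem_closure (a : A) :
      algebraMap A L a ∈ Subfield.closure (algebraMap B L '' C) := by
    rw [IsScalarTower.algebraMap_apply A B L]
    exact mem_closure _ (C.algebraMap_mem a)
  refine ⟨C, Algebra.finite_adjoin_of_finite_of_isIntegral (t.finite_toSet.image num)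
    fun b _ ↦ Algebra.IsIntegral.isIntegral b, le_antisymm ?_ ?_⟩
  · have hC : C ≤ ((IntermediateField.adjoin K (t : Set L)).toSubalgebra.restrictScalars A).comap
        (IsScalarTower.toAlgHom A B L) :=
      Algebra.adjoin_le (Set.image_subset_iff.2 fun x hx ↦
        num_mem x (IntermediateField.subset_adjoin K _ hx))
    exact Subfield.closure_le.2 (Set.image_subset_iff.2 hC)
  · rw [IntermediateField.adjoin_toSubfield, Subfield.closure_le, Set.union_subset_iff]
    constructor
    · rintro _ ⟨x, rfl⟩
      obtain ⟨a, b, -, rfl⟩ := IsFractionRing.div_surjective (A := A) x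
      simp only [map_div₀, ← IsScalarTower.algebraMap_apply]
      exact div_mem (algebraMap_mem_closure a) (algebraMap_mem_closure b)
    · intro x hx
      rw [hdiv x]
      exact div_mem (mem_closure _ (Algebra.subset_adjoin ⟨x, hx, rfl⟩))
        (algebraMap_mem_closure _)

end FractionRing

section FunctionField

variable {X Y Z : Scheme.{u}}

instance nonempty_top_opens [Nonempty X] : Nonempty (⊤ : X.Opens) :=
  ⟨⟨Classical.arbitrary X, trivial⟩⟩

section Irreducible

variable [IrreducibleSpace X] [IrreducibleSpace Y] [IrreducibleSpace Z]

lemma genericPoint_eq_of_isDominant (f : X ⟶ Y) [IsDominant f] :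
    f (genericPoint X) = genericPoint Y := by
  have h := (genericPoint_spec X).image f.continuous
  rw [Set.image_univ, f.denseRange.closure_range] at h
  exact h.eq (genericPoint_spec Y)

/-- The pullback of rational functions `k(Y) → k(X)` along a morphism mapping the generic point of
`X` to that of `Y`. It is the stalk map at the generic point of `X`, preceded by the transport of
the stalk of `Y` along the equality of points `hf`. -/
noncomputable def functionFieldMap (f : X ⟶ Y) (hf : f (genericPoint X) = genericPoint Y) :
    Y.functionField →+* X.functionField :=
  (eqToHom (by rw [hf]) ≫ f.stalkMap (genericPoint X)).hom

lemma functionFieldMap_germ (f : X ⟶ Y) (hf : f (genericPoint X) = genericPoint Y) (U : Y.Opens)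
    [Nonempty U] [Nonempty (f ⁻¹ᵁ U)] (s : Γ(Y, U)) :
    functionFieldMap f hf (Y.germToFunctionField U s) =
      X.germToFunctionField (f ⁻¹ᵁ U) (f.app U s) := by
  have germ_of_eq (y : Y) (hy : y = f (genericPoint X)) (hyU : y ∈ U) :
      (eqToHom (by rw [hy]) ≫ f.stalkMap (genericPoint X)) (Y.presheaf.germ U y hyU s) =
        X.presheaf.germ (f ⁻¹ᵁ U) (genericPoint X) (by subst hy; exact hyU) (f.app U s) := by
    subst hy
    simp only [eqToHom_refl, Category.id_comp]
    exact f.germ_stalkMap_apply U _ hyU s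
  exact germ_of_eq _ hf.symm _

lemma functionFieldMap_comp (f : X ⟶ Y) (g : Y ⟶ Z) (hf : f (genericPoint X) = genericPoint Y)
    (hg : g (genericPoint Y) = genericPoint Z) (hfg : (f ≫ g) (genericPoint X) = genericPoint Z) :
    functionFieldMap (f ≫ g) hfg = (functionFieldMap f hf).comp (functionFieldMap g hg) := by
  ext x
  obtain ⟨U, hU, s, rfl⟩ := Z.presheaf.exists_germ_eq x
  have : Nonempty U := ⟨_, hU⟩
  have : Nonempty (g ⁻¹ᵁ U) := ⟨genericPoint Y, by simpa [hg] using hU⟩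
  have : Nonempty (f ⁻¹ᵁ g ⁻¹ᵁ U) := ⟨genericPoint X, by simpa [hf, hg] using hU⟩
  have : Nonempty ((f ≫ g) ⁻¹ᵁ U) := this
  rw [RingHom.comp_apply, functionFieldMap_germ, functionFieldMap_germ, functionFieldMap_germ,
    Scheme.Hom.comp_app]
  rfl

lemma functionFieldMap_germ_top (f : X ⟶ Y) (hf : f (genericPoint X) = genericPoint Y)
    (s : Γ(Y, ⊤)) :
    functionFieldMap f hf (algebraMap Γ(Y, ⊤) Y.functionField s) =
      algebraMap Γ(X, ⊤) X.functionField (f.appTop s) :=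
  have : Nonempty (f ⁻¹ᵁ ⊤) := nonempty_top_opens
  functionFieldMap_germ f hf ⊤ s

end Irreducible

lemma fieldRange_functionFieldMap [IsIntegral X] [IsIntegral Y] [IsAffine Y] (f : X ⟶ Y)
    (hf : f (genericPoint X) = genericPoint Y) :
    (functionFieldMap f hf).fieldRange =
      Subfield.closure (algebraMap Γ(X, ⊤) X.functionField '' Set.range f.appTop) := by
  have := functionField_isFractionRing_of_isAffineOpen Y ⊤ (isAffineOpen_top Y)
  have hg : (functionFieldMap f hf).comp (algebraMap Γ(Y, ⊤) Y.functionField) =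
      (algebraMap Γ(X, ⊤) X.functionField).comp f.appTop.hom :=
    RingHom.ext (functionFieldMap_germ_top f hf)
  rw [IsFractionRing.ringHom_fieldRange_eq_of_comp_eq hg, RingHom.coe_range, RingHom.coe_comp,
    Set.range_comp]

lemma finite_functionFieldMap [IsIntegral X] [IsIntegral Y] [IsAffine Y] (f : X ⟶ Y) [IsFinite f]
    (hf : f (genericPoint X) = genericPoint Y) : (functionFieldMap f hf).Finite := by
  have : IsAffine X := isAffine_of_isAffineHom f
  let : Algebra Γ(Y, ⊤) Γ(X, ⊤) := f.appTop.hom.toAlgebra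
  let : Algebra Y.functionField X.functionField := (functionFieldMap f hf).toAlgebra
  let : Algebra Γ(Y, ⊤) X.functionField := Algebra.compHom _ f.appTop.hom
  have : IsScalarTower Γ(Y, ⊤) Γ(X, ⊤) X.functionField := .of_algebraMap_eq fun _ ↦ rfl
  have : IsScalarTower Γ(Y, ⊤) Y.functionField X.functionField :=
    .of_algebraMap_eq fun a ↦ (functionFieldMap_germ_top f hf a).symm
  have : Module.Finite Γ(Y, ⊤) Γ(X, ⊤) := f.finite_appTop
  have := functionField_isFractionRing_of_isAffineOpen X ⊤ (isAffineOpen_top X)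
  have := functionField_isFractionRing_of_isAffineOpen Y ⊤ (isAffineOpen_top Y)
  have : FaithfulSMul Γ(Y, ⊤) X.functionField := .trans _ Y.functionField _
  have : FaithfulSMul Γ(Y, ⊤) Γ(X, ⊤) := .tower_bot _ _ X.functionField
  exact Module.Finite.of_isLocalization Γ(Y, ⊤) Γ(X, ⊤) (nonZeroDivisors Γ(Y, ⊤))

lemma isDominant_SpecMap_of_injective {R S : CommRingCat.{u}} (i : R ⟶ S)
    (hi : Function.Injective i) : IsDominant (Spec.map i) where
  denseRange := by
    change DenseRange (PrimeSpectrum.comap i.hom)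
    rw [PrimeSpectrum.denseRange_comap_iff_ker_le_nilRadical,
      (RingHom.injective_iff_ker_eq_bot i.hom).1 hi]
    exact bot_le

lemma range_appTop_toSpecΓ_comp_SpecMap {R : CommRingCat.{u}} (i : R ⟶ Γ(X, ⊤)) :
    Set.range (X.toSpecΓ ≫ Spec.map i).appTop = Set.range i := by
  have h : i = (Scheme.ΓSpecIso R).inv ≫ (X.toSpecΓ ≫ Spec.map i).appTop := by simp
  have hsurj : Function.Surjective (Scheme.ΓSpecIso R).inv :=
    (ConcreteCategory.bijective_of_isIso _).surjective
  conv_rhs => rw [h]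
  exact (hsurj.range_comp _).symm

lemma exists_isFinite_factorization_fieldRange_eq [IsIntegral X] [IsIntegral Y] [IsAffine Y]
    (f : X ⟶ Y) [IsFinite f] (hf : f (genericPoint X) = genericPoint Y)
    (E : Subfield X.functionField) (hE : (functionFieldMap f hf).fieldRange ≤ E) :
    ∃ (Z : Scheme.{u}) (_ : IsIntegral Z) (f₁ : X ⟶ Z) (f₂ : Z ⟶ Y)
      (h₁ : f₁ (genericPoint X) = genericPoint Z), IsAffine Z ∧ IsFinite f₂ ∧ f₁ ≫ f₂ = f ∧
        (functionFieldMap f₁ h₁).fieldRange = E := by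
  have : IsAffine X := isAffine_of_isAffineHom f
  let : Algebra Γ(Y, ⊤) Γ(X, ⊤) := f.appTop.hom.toAlgebra
  let : Algebra Y.functionField X.functionField := (functionFieldMap f hf).toAlgebra
  let : Algebra Γ(Y, ⊤) X.functionField := Algebra.compHom _ f.appTop.hom
  have : IsScalarTower Γ(Y, ⊤) Γ(X, ⊤) X.functionField := .of_algebraMap_eq fun _ ↦ rfl
  have : IsScalarTower Γ(Y, ⊤) Y.functionField X.functionField :=
    .of_algebraMap_eq fun a ↦ (functionFieldMap_germ_top f hf a).symm
  have : Module.Finite Γ(Y, ⊤) Γ(X, ⊤) := f.finite_appTop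
  have : Module.Finite Y.functionField X.functionField := finite_functionFieldMap f hf
  have := functionField_isFractionRing_of_isAffineOpen X ⊤ (isAffineOpen_top X)
  have := functionField_isFractionRing_of_isAffineOpen Y ⊤ (isAffineOpen_top Y)
  obtain ⟨C, hCfin, hCE⟩ := exists_subalgebra_finite_closure_image_eq (A := Γ(Y, ⊤)) (B := Γ(X, ⊤))
    (E.toIntermediateField fun x ↦ hE ⟨x, rfl⟩).fg_of_noetherian
  let i₁ : CommRingCat.of C ⟶ Γ(X, ⊤) := CommRingCat.ofHom C.val.toRingHom
  let i₂ : Γ(Y, ⊤) ⟶ CommRingCat.of C := CommRingCat.ofHom (algebraMap Γ(Y, ⊤) C)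
  have : IsDomain (CommRingCat.of C) := inferInstanceAs (IsDomain C)
  have : IsFinite (Spec.map i₂) := (IsFinite.SpecMap_iff i₂).2 (RingHom.finite_algebraMap.2 hCfin)
  have : IsDominant (Spec.map i₁) := isDominant_SpecMap_of_injective i₁ Subtype.val_injective
  refine ⟨Spec (.of C), inferInstance, X.toSpecΓ ≫ Spec.map i₁, Spec.map i₂ ≫ Y.isoSpec.inv,
    genericPoint_eq_of_isDominant _, inferInstance, inferInstance, ?_, ?_⟩
  · have hi : i₂ ≫ i₁ = f.appTop := rfl
    rw [Category.assoc, ← Spec.map_comp_assoc, hi, ← Scheme.toSpecΓ_naturality_assoc,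
      Scheme.toSpecΓ_isoSpec_inv, Category.comp_id]
  · rw [fieldRange_functionFieldMap, range_appTop_toSpecΓ_comp_SpecMap]
    have hi₁ : Set.range i₁ = C := Subtype.range_val
    rw [hi₁]
    exact hCE

lemma exists_factorization_purelyInseparable_separable_of_isAffine [IsIntegral X] [IsIntegral Y]
    [IsAffine Y] (f : X ⟶ Y) [IsFinite f] (hf : f (genericPoint X) = genericPoint Y) :
    ∃ (Z : Scheme.{u}) (_ : IsIntegral Z) (f₁ : X ⟶ Z) (f₂ : Z ⟶ Y)
      (h₁ : f₁ (genericPoint X) = genericPoint Z) (h₂ : f₂ (genericPoint Z) = genericPoint Y),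
      IsAffine Z ∧ IsFinite f₂ ∧ f₁ ≫ f₂ = f ∧
        (letI := (functionFieldMap f₁ h₁).toAlgebra
         IsPurelyInseparable Z.functionField X.functionField) ∧
        (letI := (functionFieldMap f₂ h₂).toAlgebra
         Algebra.IsSeparable Y.functionField Z.functionField) := by
  let : Algebra Y.functionField X.functionField := (functionFieldMap f hf).toAlgebra
  have : Module.Finite Y.functionField X.functionField := finite_functionFieldMap f hf
  let S := separableClosure Y.functionField X.functionField
  obtain ⟨Z, hZint, f₁, f₂, h₁, hZ, hf₂, hcomp, hrange⟩ :=
    exists_isFinite_factorization_fieldRange_eq f hf S.toSubfield (by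
      rintro _ ⟨x, rfl⟩
      exact S.algebraMap_mem x)
  have h₂ : f₂ (genericPoint Z) = genericPoint Y := by
    rw [← h₁, ← Scheme.Hom.comp_apply, hcomp, hf]
  let : Algebra Z.functionField X.functionField := (functionFieldMap f₁ h₁).toAlgebra
  let : Algebra Y.functionField Z.functionField := (functionFieldMap f₂ h₂).toAlgebra
  have : IsScalarTower Y.functionField Z.functionField X.functionField :=
    .of_algebraMap_eq' (by subst hcomp; exact functionFieldMap_comp f₁ f₂ h₁ h₂ hf)
  have hS : (IsScalarTower.toAlgHom Y.functionField Z.functionField X.functionField).fieldRange =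
      S := SetLike.ext fun x ↦ (SetLike.ext_iff.1 hrange x :)
  exact ⟨Z, hZint, f₁, f₂, h₁, h₂, hZ, hf₂, hcomp,
    isPurelyInseparable_of_separableClosure_le_fieldRange hS.ge,
    isSeparable_of_fieldRange_le_separableClosure hS.le⟩

end FunctionField

theorem exists_affine_opens_factorization_purelyInseparable_separable_general
    {S : Scheme.{u}} [S.IsSeparated] (U U' : Scheme.{u}) (sU : U ⟶ S) (sU' : U' ⟶ S)
    [IsIntegral U] [IsIntegral U'] [LocallyOfFiniteType sU]
    (φ : U' ⟶ U) [IsFinite φ] [IsDominant φ] (hφS : φ ≫ sU = sU') :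
    ∃ (W : U.Opens) (W' : U'.Opens),
      (W : Set U).Nonempty ∧ (W' : Set U').Nonempty ∧ IsAffineOpen W ∧ IsAffineOpen W' ∧
      φ '' (W' : Set U') ⊆ (W : Set U) ∧
      ∃ (W'' : Scheme.{u}) (sW'' : W'' ⟶ S) (φ₁ : W'.toScheme ⟶ W'') (φ₂ : W'' ⟶ W.toScheme),
        IsAffine W'' ∧ IsSeparated sW'' ∧ LocallyOfFiniteType sW'' ∧ QuasiCompact sW'' ∧
        φ₁ ≫ sW'' = W'.ι ≫ sU' ∧ φ₂ ≫ W.ι ≫ sU = sW'' ∧ φ₁ ≫ φ₂ ≫ W.ι = W'.ι ≫ φ ∧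
        ∃ (_ : IsIntegral W.toScheme) (_ : IsIntegral W'.toScheme) (_ : IsIntegral W'')
          (h₁ : φ₁ (genericPoint W'.toScheme) = genericPoint W'')
          (h₂ : φ₂ (genericPoint W'') = genericPoint W.toScheme),
          (letI := (functionFieldMap φ₁ h₁).toAlgebra
           IsPurelyInseparable W''.functionField W'.toScheme.functionField) ∧
          (letI := (functionFieldMap φ₂ h₂).toAlgebra
           Algebra.IsSeparable W.toScheme.functionField W''.functionField) := by
  obtain ⟨W, hW, hηW, -⟩ :=
    exists_isAffineOpen_mem_and_subset (TopologicalSpace.Opens.mem_top (genericPoint U))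
  have hηW' : genericPoint U' ∈ φ ⁻¹ᵁ W := by
    rwa [Scheme.Hom.mem_preimage, genericPoint_eq_of_isDominant φ]
  have : Nonempty W := ⟨⟨_, hηW⟩⟩
  have : Nonempty (φ ⁻¹ᵁ W) := ⟨⟨_, hηW'⟩⟩
  have : IsAffine W.toScheme := hW
  have : IsDominant (φ ∣_ W) := IsZariskiLocalAtTarget.restrict ‹_› W
  obtain ⟨W'', _, φ₁, φ₂, h₁, h₂, hW'', _, hcomp, hinsep, hsep⟩ :=
    exists_factorization_purelyInseparable_separable_of_isAffine (φ ∣_ W)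
      (genericPoint_eq_of_isDominant _)
  have hφ : φ₁ ≫ φ₂ ≫ W.ι = (φ ⁻¹ᵁ W).ι ≫ φ := by
    rw [← Category.assoc, hcomp, morphismRestrict_ι]
  have : IsAffineHom (φ₂ ≫ W.ι ≫ sU) := .of_comp _ (Limits.terminal.from S)
  refine ⟨W, φ ⁻¹ᵁ W, ⟨_, hηW⟩, ⟨_, hηW'⟩, hW, hW.preimage φ, Set.image_preimage_subset _ _, W'',
    φ₂ ≫ W.ι ≫ sU, φ₁, φ₂, hW'', inferInstance, inferInstance, inferInstance, ?_, rfl, hφ,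
    inferInstance, inferInstance, inferInstance, h₁, h₂, hinsep, hsep⟩
  rw [← hφS, reassoc_of% hφ]

/-- Let `k` be an algebraically closed field, let `U` and `U'` be integral
`k`-varieties (integral separated `k`-schemes of finite type) and let `φ : U' → U` be a finite
surjective morphism.  Then there are a nonempty affine open `W ⊆ U`, a nonempty affine open
`W' ⊆ U'` with `φ(W') ⊆ W`, an integral affine `k`-variety `W''` and `k`-morphisms
`φ₁ : W' → W''`, `φ₂ : W'' → W` such that the restriction of `φ` to `W'` equals `φ₂ ∘ φ₁`, the
function field extension `k(W'') ↪ k(W')` induced by `φ₁` is purely inseparable, and the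
function field extension `k(W) ↪ k(W'')` induced by `φ₂` is separable. -/
theorem exists_affine_opens_factorization_purelyInseparable_separable
    {k : Type u} [Field k] [IsAlgClosed k]
    (U U' : Scheme.{u})
    (sU : U ⟶ Spec (CommRingCat.of k)) (sU' : U' ⟶ Spec (CommRingCat.of k))
    [IsIntegral U] [IsIntegral U']
    [IsSeparated sU] [LocallyOfFiniteType sU] [QuasiCompact sU]
    [IsSeparated sU'] [LocallyOfFiniteType sU'] [QuasiCompact sU']
    (φ : U' ⟶ U) [IsFinite φ] [Surjective φ] (hφk : φ ≫ sU = sU') :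
    ∃ (W : U.Opens) (W' : U'.Opens),
      (W : Set U).Nonempty ∧ (W' : Set U').Nonempty ∧
      IsAffineOpen W ∧ IsAffineOpen W' ∧
      -- the image of `W'` under `φ` is contained in `W`
      φ.base '' (W' : Set U') ⊆ (W : Set U) ∧
      ∃ (W'' : Scheme.{u}) (sW'' : W'' ⟶ Spec (CommRingCat.of k))
        (φ₁ : W'.toScheme ⟶ W'') (φ₂ : W'' ⟶ W.toScheme),
        -- `W''` is an integral affine `k`-variety
        IsAffine W'' ∧ IsSeparated sW'' ∧ LocallyOfFiniteType sW'' ∧ QuasiCompact sW'' ∧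
        -- `φ₁` and `φ₂` are morphisms of `k`-schemes
        φ₁ ≫ sW'' = W'.ι ≫ sU' ∧ φ₂ ≫ W.ι ≫ sU = sW'' ∧
        -- the restriction of `φ` to `W'` equals `φ₂ ∘ φ₁`
        φ₁ ≫ φ₂ ≫ W.ι = W'.ι ≫ φ ∧
        ∃ (hW : IsIntegral W.toScheme) (hW' : IsIntegral W'.toScheme) (hW'' : IsIntegral W''),
          letI := hW
          letI := hW'
          letI := hW''
          -- `φ₁` and `φ₂` are dominant: generic points map to generic points, so that they
          -- induce extensions of function fields
          ∃ (h₁ : φ₁.base (genericPoint W'.toScheme) = genericPoint W'')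
            (h₂ : φ₂.base (genericPoint W'') = genericPoint W.toScheme),
            -- the extension `k(W'') ↪ k(W')` induced by `φ₁` is purely inseparable
            (letI : Algebra W''.functionField W'.toScheme.functionField :=
              ((eqToHom (by rw [h₁]) :
                  W''.functionField ⟶
                    W''.presheaf.stalk (φ₁.base (genericPoint W'.toScheme))) ≫
                φ₁.stalkMap (genericPoint W'.toScheme)).hom.toAlgebra
             IsPurelyInseparable W''.functionField W'.toScheme.functionField) ∧
            -- the extension `k(W) ↪ k(W'')` induced by `φ₂` is separable
            (letI : Algebra W.toScheme.functionField W''.functionField :=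
              ((eqToHom (by rw [h₂]) :
                  W.toScheme.functionField ⟶
                    W.toScheme.presheaf.stalk (φ₂.base (genericPoint W''))) ≫
                φ₂.stalkMap (genericPoint W'')).hom.toAlgebra
             Algebra.IsSeparable W.toScheme.functionField W''.functionField) :=
  exists_affine_opens_factorization_purelyInseparable_separable_general U U' sU sU' φ hφk
end

section
/- Let L be an algebraically closed field of characteristic p > 0 equipped with a nontrivial nonarchimedean absolute value |·| : L → ℝ, and let φ : L → L be the map φ(z) = z^p − z. Let F ⊆ L denote the prime field (the image of 𝔽_p in L). Then for every a ∈ L and every real number r with 0 < r ≤ 1: (1) the preimage under φ of the open ball B(φ(a), r) = { y ∈ L : |y − φ(a)| < r } equals the union over c ∈ F of the open balls B(a + c, r) = { z ∈ L : |z − (a + c)| < r }; (2) these p balls are pairwise disjoint; (3) for each c ∈ F, φ restricts to a bijection from B(a + c, r) onto B(φ(a), r). -/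
/-!
On an algebra over a finite field `K` with `q` elements, `φ z = z ^ q - z` is `K`-linear and
vanishes on `K`. On the open unit ball the linear term dominates, so `|φ w| = |w|` there and `φ`
is isometric on every open ball of radius at most `1`. Globally `φ w = ∏ c : K, (w - c)`, so
`|φ w| < 1` forces `|w - c| < 1` for some `c ∈ K`, and then `|w - c| = |φ (w - c)| = |φ w|`.
-/

section ArtinSchreierMap

variable (K L : Type*) [Field K] [Fintype K] [CommRing L] [Algebra K L]

/-- The Artin–Schreier map `z ↦ z ^ q - z` of an algebra `L` over the finite field `K` with `q`
elements, bundled as a `K`-linear endomorphism: linearity moves balls around any point to balls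
around `0`. -/
def artinSchreier : L →ₗ[K] L :=
  (FiniteField.frobeniusAlgHom K L).toLinearMap - LinearMap.id

variable {L}

lemma artinSchreier_apply (z : L) : artinSchreier K L z = z ^ Fintype.card K - z := rfl

open Polynomial in
lemma artinSchreier_eq_prod (z : L) :
    artinSchreier K L z = ∏ c : K, (z - algebraMap K L c) := by
  have hmonic : (X ^ Fintype.card K - X : K[X]).Monic :=
    monic_X_pow_sub (by simpa only [degree_X, Nat.one_lt_cast] using Fintype.one_lt_card)
  have hfactor : (X ^ Fintype.card K - X : K[X]) = ∏ c : K, (X - C c) := by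
    rw [← prod_multiset_X_sub_C_of_monic_of_roots_card_eq hmonic] <;>
      rw [FiniteField.roots_X_pow_card_sub_X]
    · exact Finset.prod_map_val ..
    · exact (FiniteField.X_pow_card_sub_X_natDegree_eq K Fintype.one_lt_card).symm
  simpa [artinSchreier_apply, map_prod] using congrArg (aeval z) hfactor

lemma artinSchreier_algebraMap (c : K) : artinSchreier K L (algebraMap K L c) = 0 := by
  rw [artinSchreier_apply, ← map_pow, FiniteField.pow_card, sub_self]

lemma artinSchreier_add_algebraMap (z : L) (c : K) :
    artinSchreier K L (z + algebraMap K L c) = artinSchreier K L z := by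
  rw [map_add, artinSchreier_algebraMap, add_zero]

lemma artinSchreier_surjective (L : Type*) [Field L] [Algebra K L] [IsSepClosed L] :
    Function.Surjective (artinSchreier K L) := by
  intro y
  have card_eq_zero : (Fintype.card K : L) = 0 := by
    rw [← map_natCast (algebraMap K L), FiniteField.cast_card_eq_zero, map_zero]
  obtain ⟨z, hz⟩ := IsSepClosed.exists_root_C_mul_X_pow_add_C_mul_X_add_C
    1 (-1) (-y) card_eq_zero Fintype.one_lt_card (neg_ne_zero.mpr one_ne_zero)
  exact ⟨z, by rw [artinSchreier_apply]; linear_combination hz⟩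

end ArtinSchreierMap

section AbsoluteValue

variable {L S : Type*} [CommRing L] [CommRing S] [LinearOrder S] [IsStrictOrderedRing S]
  {v : AbsoluteValue L S}

lemma abv_sub_lt (hna : IsNonarchimedean v) {x y b : L} {r : S} (hx : v (x - b) < r)
    (hy : v (y - b) < r) : v (x - y) < r := by
  rw [v.map_sub] at hy
  simpa only [sub_add_sub_cancel] using (hna (x - b) (b - y)).trans_lt (max_lt hx hy)

variable [Nontrivial L]

lemma abv_pow_sub_self (hna : IsNonarchimedean v) {n : ℕ} (hn : 1 < n) {w : L} (hw : v w < 1) :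
    v (w ^ n - w) = v w := by
  obtain rfl | hw0 := eq_or_ne w 0
  · rw [zero_pow (Nat.ne_zero_of_lt hn), sub_zero]
  have hlt : v (w ^ n) < v (-w) := by
    rw [map_pow, v.map_neg]
    exact pow_lt_self_of_lt_one₀ (v.pos hw0) hw hn
  rw [sub_eq_add_neg, hna.add_eq_right_of_lt hlt, v.map_neg]

variable {K : Type*} [Field K] [Fintype K] [Algebra K L]

lemma abv_artinSchreier (hna : IsNonarchimedean v) {w : L} (hw : v w < 1) :
    v (artinSchreier K L w) = v w :=
  abv_pow_sub_self hna Fintype.one_lt_card hw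

lemma exists_abv_sub_algebraMap_lt_one {w : L} (hw : v (artinSchreier K L w) < 1) :
    ∃ c : K, v (w - algebraMap K L c) < 1 := by
  by_contra! hfar
  refine hw.not_ge ?_
  rw [artinSchreier_eq_prod, map_prod]
  exact Finset.one_le_prod fun c _ ↦ hfar c

lemma abv_artinSchreier_lt_iff (hna : IsNonarchimedean v) {r : S} (hr : r ≤ 1) {w : L} :
    v (artinSchreier K L w) < r ↔ ∃ c : K, v (w - algebraMap K L c) < r := by
  have abv_eq {c : K} (hc : v (w - algebraMap K L c) < 1) :
      v (artinSchreier K L w) = v (w - algebraMap K L c) := by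
    rw [← abv_artinSchreier (K := K) hna hc, map_sub, artinSchreier_algebraMap, sub_zero]
  constructor
  · intro hw
    obtain ⟨c, hc⟩ := exists_abv_sub_algebraMap_lt_one (hw.trans_le hr)
    exact ⟨c, abv_eq hc ▸ hw⟩
  · rintro ⟨c, hc⟩
    exact (abv_eq (hc.trans_le hr)).trans_lt hc

lemma artinSchreier_preimage_ball_eq_iUnion (hna : IsNonarchimedean v) (a : L) {r : S}
    (hr : r ≤ 1) :
    artinSchreier K L ⁻¹' {y | v (y - artinSchreier K L a) < r} =
      ⋃ c ∈ Set.range (algebraMap K L), {z | v (z - (a + c)) < r} := by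
  ext z
  simp only [Set.mem_preimage, Set.mem_ofPred_eq, Set.biUnion_range, Set.mem_iUnion, ← map_sub,
    ← sub_sub, abv_artinSchreier_lt_iff hna hr]

lemma artinSchreier_injOn_ball (hna : IsNonarchimedean v) (b : L) {r : S} (hr : r ≤ 1) :
    Set.InjOn (artinSchreier K L) {z | v (z - b) < r} := by
  intro z hz w hw heq
  have hlt : v (z - w) < 1 := (abv_sub_lt hna hz hw).trans_le hr
  rw [← sub_eq_zero, ← v.eq_zero, ← abv_artinSchreier (K := K) hna hlt, map_sub, heq, sub_self,
    map_zero]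

lemma disjoint_ball_of_artinSchreier_eq (hna : IsNonarchimedean v) {b b' : L} {r : S} (hr : r ≤ 1)
    (heq : artinSchreier K L b = artinSchreier K L b') (hne : b ≠ b') :
    Disjoint {z | v (z - b) < r} {z | v (z - b') < r} := by
  refine Set.disjoint_left.mpr fun z hz hz' ↦ hne ?_
  rw [Set.mem_ofPred_eq, v.map_sub] at hz hz'
  exact artinSchreier_injOn_ball hna z hr hz hz' heq

lemma artinSchreier_bijOn_ball (hna : IsNonarchimedean v) (b : L) {r : S} (hr : r ≤ 1)
    (hrange : ∀ y, v y < r → y ∈ Set.range (artinSchreier K L)) :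
    Set.BijOn (artinSchreier K L) {z | v (z - b) < r} {y | v (y - artinSchreier K L b) < r} := by
  refine ⟨fun z hz ↦ ?mapsTo, artinSchreier_injOn_ball hna b hr, fun y hy ↦ ?surjOn⟩
  case mapsTo =>
    rw [Set.mem_ofPred_eq] at hz ⊢
    rwa [← map_sub, abv_artinSchreier hna (hz.trans_le hr)]
  case surjOn =>
    obtain ⟨w, hw⟩ := hrange _ hy
    obtain ⟨c, hc⟩ := (abv_artinSchreier_lt_iff hna hr).mp ((congrArg v hw).trans_lt hy)
    refine ⟨b + (w - algebraMap K L c), ?_, ?_⟩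
    · rwa [Set.mem_ofPred_eq, add_sub_cancel_left]
    · rw [map_add, map_sub, artinSchreier_algebraMap, hw, sub_zero, add_sub_cancel]

theorem artinSchreier_preimage_ball_general (hna : IsNonarchimedean v) (a : L) {r : S}
    (hr : r ≤ 1) (hrange : ∀ y, v y < r → y ∈ Set.range (artinSchreier K L)) :
    (artinSchreier K L ⁻¹' {y | v (y - artinSchreier K L a) < r} =
      ⋃ c ∈ Set.range (algebraMap K L), {z | v (z - (a + c)) < r}) ∧
    (∀ c ∈ Set.range (algebraMap K L), ∀ c' ∈ Set.range (algebraMap K L), c ≠ c' →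
      Disjoint {z | v (z - (a + c)) < r} {z | v (z - (a + c')) < r}) ∧
    (∀ c ∈ Set.range (algebraMap K L), Set.BijOn (artinSchreier K L)
      {z | v (z - (a + c)) < r} {y | v (y - artinSchreier K L a) < r}) := by
  refine ⟨artinSchreier_preimage_ball_eq_iUnion hna a hr, ?_, ?_⟩
  · rintro _ ⟨c, rfl⟩ _ ⟨c', rfl⟩ hne
    exact disjoint_ball_of_artinSchreier_eq (K := K) hna hr
      (by simp only [artinSchreier_add_algebraMap]) ((add_right_injective a).ne hne)
  · rintro _ ⟨c, rfl⟩
    rw [← artinSchreier_add_algebraMap K a c]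
    exact artinSchreier_bijOn_ball hna _ hr hrange

end AbsoluteValue

/-- Let `L` be an algebraically closed field of characteristic `p > 0` with a
nontrivial nonarchimedean absolute value `v`, let `φ z = z ^ p - z`, and let `F ⊆ L` be the
prime field (the image of `𝔽_p` in `L`).  For every `a ∈ L` and every real `0 < r ≤ 1`:
(1) `φ ⁻¹' B(φ a, r) = ⋃ (c ∈ F), B(a + c, r)`; (2) these `p` balls are pairwise disjoint;
(3) for each `c ∈ F`, `φ` restricts to a bijection from `B(a + c, r)` onto `B(φ a, r)`. -/
theorem artinSchreier_preimage_ball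
    {L : Type*} [Field L] [IsAlgClosed L]
    (p : ℕ) [Fact p.Prime] [CharP L p]
    (v : AbsoluteValue L ℝ)
    (hna : IsNonarchimedean v)
    (hnt : ∃ x : L, v x ≠ 0 ∧ v x ≠ 1)
    (φ : L → L) (hφ : ∀ z : L, φ z = z ^ p - z)
    (F : Set L) (hF : F = Set.range (ZMod.castHom (dvd_refl p) L))
    (a : L) (r : ℝ) (hr0 : 0 < r) (hr1 : r ≤ 1) :
    (φ ⁻¹' { y : L | v (y - φ a) < r } = ⋃ c ∈ F, { z : L | v (z - (a + c)) < r }) ∧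
    (∀ c ∈ F, ∀ c' ∈ F, c ≠ c' →
      Disjoint { z : L | v (z - (a + c)) < r } { z : L | v (z - (a + c')) < r }) ∧
    (∀ c ∈ F, Set.BijOn φ { z : L | v (z - (a + c)) < r } { y : L | v (y - φ a) < r }) := by
  let := ZMod.algebra L p
  obtain rfl : φ = artinSchreier (ZMod p) L := funext fun z ↦ by
    rw [hφ, artinSchreier_apply, ZMod.card]
  subst hF
  exact artinSchreier_preimage_ball_general hna a hr1
    fun y _ ↦ artinSchreier_surjective (ZMod p) L y
end

section
/- Let m ≥ 1 and endow [0,∞]^m (the m-fold product of the extended nonnegative real half-line with its order topology) with the product topology. Let D be a nonempty subset of [0,∞]^m satisfying: (i) D is upward closed for the coordinatewise order, i.e. if u ∈ D and u_j ≤ v_j for all j then v ∈ D; (ii) D is closed under limits of coordinatewise nonincreasing sequences, i.e. if (u⁽ᵏ⁾) is a sequence in D with u⁽ᵏ⁺¹⁾_j ≤ u⁽ᵏ⁾_j for all j and k, then its (coordinatewise) limit belongs to D. Then D is a closed, hence compact, subset of [0,∞]^m; consequently every continuous function g : [0,∞]^m → [0,∞] attains its infimum over D at some point of D. -/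
open ENNReal

/-! A convergent sequence in a product of complete linear orders is, coordinatewise, the infimum of
its tail suprema. If the sequence lies in an upper set, so do the tail suprema, and they form an
antitone sequence; hence closure under infima of antitone sequences captures every sequential
limit. -/

open Filter Topology

theorem limsup_mem_of_isUpperSet_of_antitone_iInf_mem {X : Type*} [CompleteLattice X] {D : Set X}
    (hup : IsUpperSet D)
    (hinf : ∀ u : ℕ → X, Antitone u → (∀ k, u k ∈ D) → ⨅ k, u k ∈ D)
    {u : ℕ → X} (hu : ∃ᶠ k in atTop, u k ∈ D) : limsup u atTop ∈ D := by
  rw [limsup_eq_iInf_iSup_of_nat]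
  refine hinf _ (fun k l hkl => biSup_mono fun _ hi => hkl.trans hi) fun k => ?_
  obtain ⟨i, hki, hi⟩ := frequently_atTop.1 hu k
  exact hup (le_iSup₂_of_le i hki le_rfl) hi

section Pi

variable {ι : Type*} {α : ι → Type*} [∀ i, CompleteLinearOrder (α i)]
  [∀ i, TopologicalSpace (α i)] [∀ i, OrderTopology (α i)] {D : Set (∀ i, α i)}

theorem limsup_eq_of_tendsto_pi {κ : Type*} {l : Filter κ} [l.NeBot] {u : κ → ∀ i, α i}
    {x : ∀ i, α i} (hu : Tendsto u l (𝓝 x)) : limsup u l = x := by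
  funext i
  calc limsup u l i = limsup (fun k => u k i) l := by
        simp only [limsup_eq_iInf_iSup, iInf_apply, iSup_apply]
    _ = x i := (tendsto_pi_nhds.1 hu i).limsup_eq

theorem isSeqClosed_of_isUpperSet_of_antitone_iInf_mem (hup : IsUpperSet D)
    (hinf : ∀ u : ℕ → ∀ i, α i, Antitone u → (∀ k, u k ∈ D) → ⨅ k, u k ∈ D) :
    IsSeqClosed D := fun _ _ hu hux =>
  limsup_eq_of_tendsto_pi hux ▸
    limsup_mem_of_isUpperSet_of_antitone_iInf_mem hup hinf (Frequently.of_forall hu)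

theorem upwardClosed_antitoneLimitClosed_isClosed_isCompact_attains_inf_general
    [Countable ι] [∀ i, FirstCountableTopology (α i)] (hne : D.Nonempty) (hup : IsUpperSet D)
    (hinf : ∀ u : ℕ → ∀ i, α i, Antitone u → (∀ k, u k ∈ D) → ⨅ k, u k ∈ D) :
    IsClosed D ∧ IsCompact D ∧ ∀ {β : Type*} [LinearOrder β] (g : (∀ i, α i) → β),
      LowerSemicontinuousOn g D → ∃ d ∈ D, IsMinOn g D d := by
  have hclosed : IsClosed D :=
    (isSeqClosed_of_isUpperSet_of_antitone_iInf_mem hup hinf).isClosed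
  exact ⟨hclosed, hclosed.isCompact, fun _ hg => hg.exists_isMinOn hne hclosed.isCompact⟩

end Pi

/-- Let `m ≥ 1` and let `D` be a nonempty subset of `[0,∞]^m` which is upward
closed for the coordinatewise order and closed under limits of coordinatewise nonincreasing
sequences (such a sequence converges to the tuple of coordinatewise infima).  Then `D` is
closed, hence compact, and every continuous `g : [0,∞]^m → [0,∞]` attains its infimum over `D`
at some point of `D`. -/
theorem upwardClosed_antitoneLimitClosed_isClosed_isCompact_attains_inf
    (m : ℕ) (hm : 1 ≤ m)
    (D : Set (Fin m → ℝ≥0∞)) (hne : D.Nonempty)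
    (hup : ∀ u ∈ D, ∀ w : Fin m → ℝ≥0∞, (∀ j, u j ≤ w j) → w ∈ D)
    (hlim : ∀ u : ℕ → (Fin m → ℝ≥0∞), (∀ k, u k ∈ D) →
      (∀ k j, u (k + 1) j ≤ u k j) → (fun j => ⨅ k, u k j) ∈ D) :
    IsClosed D ∧ IsCompact D ∧
      ∀ g : (Fin m → ℝ≥0∞) → ℝ≥0∞, Continuous g → ∃ d ∈ D, ∀ u ∈ D, g d ≤ g u := by
  have ⟨hclosed, hcompact, hmin⟩ :=
    upwardClosed_antitoneLimitClosed_isClosed_isCompact_attains_inf_general hne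
      (fun u w huw hu => hup u hu w huw) fun u hanti hu =>
        (funext fun _ => iInf_apply : ⨅ k, u k = _) ▸ hlim u hu fun k => hanti k.le_succ
  exact ⟨hclosed, hcompact, fun g hg => hmin g (hg.lowerSemicontinuous.lowerSemicontinuousOn D)⟩
end
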